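/- Let k be a positive integer. If f ∈ E_c(k) and t ∈ (0, ∞), then tf ∈ E_c(k). (Consequently every distribution in D_c(k) is infinitely divisible with respect to the Boolean convolution.) -/

import Mathlib

open Finset

attribute [local instance] Classical.propDecidable

open scoped ComplexOrder

namespace BBP

/-- Partitions of `{1,…,m}` modeled as `Finpartition`s of `univ : Finset (Fin m)`. -/
abbrev FP (m : ℕ) := Finpartition (Finset.univ : Finset (Fin m))

noncomputable instance (m : ℕ) : Fintype (FP m) :=
  Fintype.ofInjective (fun π : FP m => π.parts) fun a b h => by
    cases a; cases b; simpa using h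

/-- `x` is the minimum of the set `C`. -/
def IsMinOf {m : ℕ} (x : Fin m) (C : Finset (Fin m)) : Prop :=
  x ∈ C ∧ ∀ y ∈ C, x ≤ y

/-- `x` is the maximum of the set `C`. -/
def IsMaxOf {m : ℕ} (x : Fin m) (C : Finset (Fin m)) : Prop :=
  x ∈ C ∧ ∀ y ∈ C, y ≤ x

/-- `a` and `b` lie in one block of `π`. -/
def SameBlock {m : ℕ} (π : FP m) (a b : Fin m) : Prop :=
  ∃ B ∈ π.parts, a ∈ B ∧ b ∈ B

/-- `π` is non-crossing: if `i<j<k<l`, `i,k` in one block and `j,l` in one block,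
then all of them are in one block. -/
def IsNC {m : ℕ} (π : FP m) : Prop :=
  ∀ i j k l : Fin m, i < j → j < k → k < l →
    SameBlock π i k → SameBlock π j l → SameBlock π i j

/-- `A` embraces `B` : `min A ≤ min B` and `max B ≤ max A`. -/
def Embraces {m : ℕ} (A B : Finset (Fin m)) : Prop :=
  ∃ a₁ a₂ b₁ b₂ : Fin m, IsMinOf a₁ A ∧ IsMaxOf a₂ A ∧ IsMinOf b₁ B ∧ IsMaxOf b₂ B ∧
    a₁ ≤ b₁ ∧ b₂ ≤ a₂

/-- `B` strictly embraces `A` : `min B < min A` and `max A < max B`. -/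
def StrictlyEmbraces {m : ℕ} (B A : Finset (Fin m)) : Prop :=
  ∃ b₁ b₂ a₁ a₂ : Fin m, IsMinOf b₁ B ∧ IsMaxOf b₂ B ∧ IsMinOf a₁ A ∧ IsMaxOf a₂ A ∧
    b₁ < a₁ ∧ a₂ < b₂

/-- `A` is an outer block of `π`. -/
def IsOuter {m : ℕ} (π : FP m) (A : Finset (Fin m)) : Prop :=
  A ∈ π.parts ∧ ¬ ∃ B ∈ π.parts, StrictlyEmbraces B A

/-- The number `|π|_out` of outer blocks of `π`. -/
noncomputable def numOuter {m : ℕ} (π : FP m) : ℕ :=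
  (π.parts.filter fun A => IsOuter π A).card

/-- Reversed refinement order: every block of `ρ` is a union of blocks of `π`. -/
def Refines {m : ℕ} (π ρ : FP m) : Prop :=
  ∀ B ∈ π.parts, ∃ C ∈ ρ.parts, B ⊆ C

/-- The partial order `π ≪ ρ`. -/
def Ll {m : ℕ} (π ρ : FP m) : Prop :=
  Refines π ρ ∧
    ∀ C ∈ ρ.parts, ∃ B ∈ π.parts, ∃ x y : Fin m,
      IsMinOf x C ∧ IsMaxOf y C ∧ x ∈ B ∧ y ∈ B

/-- The partition `1ₙ` of `{1,…,n+1}` with a single block. -/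
noncomputable def fullPart (n : ℕ) : FP (n+1) :=
  Finpartition.indiscrete (by simpa using (Finset.univ_nonempty (α := Fin (n+1))).ne_empty)

/-- `π` is an interval partition. -/
def IsIntervalPartition {m : ℕ} (π : FP m) : Prop :=
  ∀ B ∈ π.parts, ∀ x ∈ B, ∀ z ∈ B, ∀ y : Fin m, x ≤ y → y ≤ z → y ∈ B

/-- `σ` is the permutation associated to `π` : on each block `{b₁ < ⋯ < b_q}` it is the
cycle `b₁ ↦ b₂ ↦ ⋯ ↦ b_q ↦ b₁`. -/
def IsAssocPerm {m : ℕ} (π : FP m) (σ : Equiv.Perm (Fin m)) : Prop :=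
  ∀ B ∈ π.parts, ∀ b ∈ B, σ b ∈ B ∧
    ((b < σ b ∧ ∀ x ∈ B, b < x → σ b ≤ x) ∨ (IsMaxOf b B ∧ IsMinOf (σ b) B))

/-- `κ` is the Kreweras complement of `π`, characterized by `P_κ = P_π⁻¹ ∘ P_{1ₙ}`,
where `P_{1ₙ}` is the cycle `1 ↦ 2 ↦ ⋯ ↦ n ↦ 1` (i.e. `finRotate`). -/
def IsKrewerasPair {m : ℕ} (π κ : FP m) : Prop :=
  ∃ σπ σκ : Equiv.Perm (Fin m), IsAssocPerm π σπ ∧ IsAssocPerm κ σκ ∧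
    σκ = σπ⁻¹ * finRotate m

/-- the element `2a-1` of `{1,…,2n}`, in `Fin (2n)` (0-indexed). -/
def oddEmb {n : ℕ} (a : Fin n) : Fin (2*n) := ⟨2*a.val, by have := a.isLt; omega⟩

/-- the element `2a` of `{1,…,2n}`, in `Fin (2n)` (0-indexed). -/
def evenEmb {n : ℕ} (a : Fin n) : Fin (2*n) := ⟨2*a.val + 1, by have := a.isLt; omega⟩

/-- `θ = π^(odd) ∪ ρ^(even)` : the blocks of `θ` are the sets `{2a-1 : a ∈ A}` for `A`
a block of `π` and the sets `{2b : b ∈ B}` for `B` a block of `ρ`. -/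
def IsOddEvenJoin {n : ℕ} (π ρ : FP n) (θ : FP (2*n)) : Prop :=
  θ.parts = π.parts.image (fun B => B.image oddEmb) ∪
    ρ.parts.image (fun B => B.image evenEmb)

/-- a block consisting of odd elements of `{1,…,2n}` (even 0-indexed values). -/
def OddBlock {m : ℕ} (B : Finset (Fin m)) : Prop := ∀ x ∈ B, x.val % 2 = 0

/-- a block consisting of even elements of `{1,…,2n}` (odd 0-indexed values). -/
def EvenBlock {m : ℕ} (B : Finset (Fin m)) : Prop := ∀ x ∈ B, x.val % 2 = 1

/-- every block of `θ` is contained in the odds or in the evens. -/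
def ParityPreserving {m : ℕ} (θ : FP m) : Prop :=
  ∀ B ∈ θ.parts, OddBlock B ∨ EvenBlock B

def OppositeParity {m : ℕ} (A B : Finset (Fin m)) : Prop :=
  (OddBlock A ∧ EvenBlock B) ∨ (EvenBlock A ∧ OddBlock B)

def SameParity {m : ℕ} (A B : Finset (Fin m)) : Prop :=
  (OddBlock A ∧ OddBlock B) ∨ (EvenBlock A ∧ EvenBlock B)

/-- `P = Parent_θ(A)` : the unique block `P ≠ A` of `θ` embracing `A` such that every
block `A' ≠ A` of `θ` embracing `A` also embraces `P`. -/
def IsParent {m : ℕ} (θ : FP m) (A P : Finset (Fin m)) : Prop :=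
  P ∈ θ.parts ∧ P ≠ A ∧ Embraces P A ∧
    ∀ A' ∈ θ.parts, A' ≠ A → Embraces A' A → Embraces A' P

/-- `θ` has exactly two outer blocks. -/
def ExactlyTwoOuterBlocks {m : ℕ} (θ : FP m) : Prop :=
  ∃ M ∈ θ.parts, ∃ N ∈ θ.parts, M ≠ N ∧ IsOuter θ M ∧ IsOuter θ N ∧
    ∀ A ∈ θ.parts, IsOuter θ A → A = M ∨ A = N

/-- A series in `ℂ₀⟨⟨z₁,…,z_k⟩⟩`, given by its family of coefficients: `f n w` is the
coefficient of `z_{w 0} z_{w 1} ⋯ z_{w n}` (a word of length `n+1 ≥ 1`). -/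
abbrev NCSeries (k : ℕ) := (n : ℕ) → (Fin (n+1) → Fin k) → ℂ

/-- The coefficient `Cf_{w|B}(f)` of the restriction of the word `w` to the set `B`,
listing the elements of `B` in increasing order.  (Equals `1` for `B = ∅`.) -/
noncomputable def partCoeff {k m : ℕ} (f : NCSeries k) (w : Fin (m+1) → Fin k)
    (B : Finset (Fin (m+1))) : ℂ :=
  if h : B.Nonempty then
    f (B.card - 1) (fun j =>
      w ((B.orderIsoOfFin (Nat.succ_pred_eq_of_pos (Finset.card_pos.mpr h)).symm j).1))
  else 1

/-- The generalized coefficient `Cf_{w;π}(f) = ∏_{B block of π} Cf_{w|B}(f)`. -/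
noncomputable def genCoeff {k m : ℕ} (f : NCSeries k) (w : Fin (m+1) → Fin k)
    (π : FP (m+1)) : ℂ :=
  ∏ B ∈ π.parts, partCoeff f w B

/-- Linear functionals on `ℂ⟨X₁,…,X_k⟩`. -/
abbrev Dist (k : ℕ) := FreeAlgebra ℂ (Fin k) →ₗ[ℂ] ℂ

/-- `μ ∈ D_alg(k)` : `μ` is normalized by `μ(1) = 1`. -/
def IsDalg {k : ℕ} (μ : Dist k) : Prop := μ 1 = 1

/-- The moment series `M_μ`, with `(momentSeries μ) n w = μ (X_{w 0} ⋯ X_{w n})`. -/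
noncomputable def momentSeries {k : ℕ} (μ : Dist k) : NCSeries k :=
  fun _ w => μ ((List.ofFn fun j => FreeAlgebra.ι ℂ (w j)).prod)

/-- `f = R_μ` : the moments of `μ` are obtained from `f` by summation over all
non-crossing partitions. -/
def IsRTransform {k : ℕ} (μ : Dist k) (f : NCSeries k) : Prop :=
  ∀ (n : ℕ) (w : Fin (n+1) → Fin k),
    momentSeries μ n w = ∑ π : FP (n+1), if IsNC π then genCoeff f w π else 0

/-- `g = η_μ` : the moments of `μ` are obtained from `g` by summation over all
interval partitions. -/
def IsEtaSeries {k : ℕ} (μ : Dist k) (g : NCSeries k) : Prop :=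
  ∀ (n : ℕ) (w : Fin (n+1) → Fin k),
    momentSeries μ n w = ∑ π : FP (n+1), if IsIntervalPartition π then genCoeff g w π else 0

/-- `μ ∈ D_c(k)` : `μ` is the joint distribution of a `k`-tuple of selfadjoint elements
with respect to a state on a unital C*-algebra. -/
def IsDc {k : ℕ} (μ : Dist k) : Prop :=
  IsDalg μ ∧
  ∃ (A : Type) (_ : NormedRing A) (_ : StarRing A) (_ : CStarRing A)
    (_ : NormedAlgebra ℂ A) (_ : StarModule ℂ A) (_ : CompleteSpace A)
    (φ : A →ₗ[ℂ] ℂ) (x : Fin k → A),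
      φ 1 = 1 ∧ (∀ a : A, 0 ≤ φ (star a * a)) ∧ (∀ i, IsSelfAdjoint (x i)) ∧
      ∀ (n : ℕ) (w : Fin (n+1) → Fin k),
        momentSeries μ n w = φ ((List.ofFn fun j => x (w j)).prod)

/-- convergence in moments. -/
def ConvInMoments {k : ℕ} (μseq : ℕ → Dist k) (μ : Dist k) : Prop :=
  ∀ P : FreeAlgebra ℂ (Fin k),
    Filter.Tendsto (fun N => μseq N P) Filter.atTop (nhds (μ P))

/-- coefficientwise convergence of series. -/
def ConvCoeffwise {k : ℕ} (fseq : ℕ → NCSeries k) (f : NCSeries k) : Prop :=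
  ∀ (n : ℕ) (w : Fin (n+1) → Fin k),
    Filter.Tendsto (fun N => fseq N n w) Filter.atTop (nhds (f n w))

/-- `ν` is the `p`-fold free additive convolution `μ ⊞ ⋯ ⊞ μ`, i.e. `R_ν = p · R_μ`. -/
def IsNFoldFree {k : ℕ} (p : ℕ) (μ ν : Dist k) : Prop :=
  ∃ f : NCSeries k, IsRTransform μ f ∧ IsRTransform ν (fun n w => (p : ℂ) * f n w)

/-- `ν` is the `p`-fold Boolean convolution `μ ⊎ ⋯ ⊎ μ`, i.e. `η_ν = p · η_μ`. -/
def IsNFoldBool {k : ℕ} (p : ℕ) (μ ν : Dist k) : Prop :=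
  ∃ g : NCSeries k, IsEtaSeries μ g ∧ IsEtaSeries ν (fun n w => (p : ℂ) * g n w)

/-- `ν = 𝔹(μ)` : the Boolean Bercovici–Pata bijection, `R_{𝔹(μ)} = η_μ`. -/
def IsBP {k : ℕ} (μ ν : Dist k) : Prop :=
  ∃ f : NCSeries k, IsEtaSeries μ f ∧ IsRTransform ν f

/-- `μ ∈ D_c(k)` is infinitely divisible with respect to `⊞`. -/
def IsInfDiv {k : ℕ} (μ : Dist k) : Prop :=
  IsDc μ ∧ ∀ N : ℕ, 0 < N → ∃ ν : Dist k, IsDc ν ∧ IsNFoldFree N ν μ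

/-- `g = Reta(f)`, i.e. there is `μ ∈ D_alg(k)` with `f = R_μ` and `g = η_μ`. -/
def RetaRel {k : ℕ} (f g : NCSeries k) : Prop :=
  ∃ μ : Dist k, IsDalg μ ∧ IsRTransform μ f ∧ IsEtaSeries μ g

/-!
Let `φ` be a state and `p` a projection with `φ(a p b) = φ(a) φ(b)`. Writing each gap of
`φ(a₀ a₁ ⋯ aₙ)` as `1 = p + (1 - p)` and expanding gives a sum over interval partitions, the gaps
with `p` being the cuts between blocks; hence the coefficients of the `η`-series are
`φ(a₀ (1 - p) a₁ (1 - p) ⋯ (1 - p) aₙ)`. By the GNS construction every distribution in `D_c(k)` is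
of this form, with `φ` a vector state on some `B(H)` and `p` the projection onto the vector. If `d`
acts as `√t` on the range of `p` and as `1` on its complement, then `d (1 - p) d = 1 - p`, so
replacing each operator `xᵢ` by `d xᵢ d` only affects the two ends of these products, and it
multiplies the `η`-series by `t` because `φ(d a d) = (√t)² φ(a)`.
-/

section IntervalPartitions

-- `Classical.propDecidable` would otherwise take precedence, and the order lemmas about `Finset`
-- are stated for the instances of the linear order.
attribute [local instance] LinearOrder.toDecidableEq LinearOrder.toDecidableLE
  LinearOrder.toDecidableLT

variable {α : Type*} [LinearOrder α] {S : Finset α}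

/-- Interval partitions of a finite subset `S` of a linear order: each block contains every point
of `S` lying between two of its points. Allowing arbitrary `S` makes splitting off the first block
a recursion within the same notion. -/
def IsInterval (π : Finpartition S) : Prop :=
  ∀ B ∈ π.parts, ∀ x ∈ B, ∀ z ∈ B, ∀ y ∈ S, x ≤ y → y ≤ z → y ∈ B

theorem nonempty_filter_le {b : α} (hb : b ∈ S) : (S.filter (· ≤ b)).Nonempty :=
  ⟨b, mem_filter.2 ⟨hb, le_rfl⟩⟩

/-- The partition of `S` obtained from a partition of the elements above `b` by adding the initial
segment `{x ∈ S | x ≤ b}` as first block. -/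
def consBlock {b : α} (hb : b ∈ S) (π : Finpartition (S.filter (b < ·))) : Finpartition S :=
  π.extend (b := S.filter (· ≤ b)) (nonempty_filter_le hb).ne_empty
    (disjoint_filter.2 fun _ _ h => h.not_ge)
    (by
      ext x
      have := lt_or_ge b x
      simp only [sup_eq_union, mem_union, mem_filter]
      tauto)

theorem parts_consBlock {b : α} (hb : b ∈ S) (π : Finpartition (S.filter (b < ·))) :
    (consBlock hb π).parts = insert (S.filter (· ≤ b)) π.parts := by
  simp [consBlock, Finpartition.extend]

theorem filter_le_notMem_parts {b : α} (hb : b ∈ S) (π : Finpartition (S.filter (b < ·))) :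
    S.filter (· ≤ b) ∉ π.parts := fun h =>
  (mem_filter.1 (π.subset h (mem_filter.2 ⟨hb, le_rfl⟩))).2.false

theorem isInterval_consBlock {b : α} (hb : b ∈ S) {π : Finpartition (S.filter (b < ·))}
    (hπ : IsInterval π) : IsInterval (consBlock hb π) := by
  intro B hB x hx z hz y hy hxy hyz
  rw [parts_consBlock, mem_insert] at hB
  rcases hB with rfl | hB
  · exact mem_filter.2 ⟨hy, hyz.trans (mem_filter.1 hz).2⟩
  · have hbx := (mem_filter.1 (π.subset hB hx)).2
    exact hπ B hB x hx z hz y (mem_filter.2 ⟨hy, hbx.trans_le hxy⟩) hxy hyz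

theorem IsInterval.exists_eq_consBlock (hS : S.Nonempty) {π : Finpartition S}
    (hπ : IsInterval π) :
    ∃ (b : α) (hb : b ∈ S) (π' : Finpartition (S.filter (b < ·))),
      IsInterval π' ∧ consBlock hb π' = π := by
  obtain ⟨B, hB, hmin⟩ := π.exists_mem (S.min'_mem hS)
  have hBne : B.Nonempty := ⟨_, hmin⟩
  set b := B.max' hBne
  have hbB : b ∈ B := B.max'_mem hBne
  have hb : b ∈ S := π.subset hB hbB
  have hBeq : B = S.filter (· ≤ b) := by
    ext x
    refine ⟨fun hx => mem_filter.2 ⟨π.subset hB hx, B.le_max' x hx⟩, fun hx => ?_⟩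
    obtain ⟨hxS, hxb⟩ := mem_filter.1 hx
    exact hπ B hB _ hmin _ hbB x hxS (S.min'_le x hxS) hxb
  have hsup : (π.parts.erase B).sup id = S.filter (b < ·) := by
    ext x
    simp only [mem_sup, mem_erase, id_eq, mem_filter]
    constructor
    · rintro ⟨C, ⟨hCB, hC⟩, hxC⟩
      have hxS := π.subset hC hxC
      refine ⟨hxS, lt_of_not_ge fun hxb => hCB (π.eq_of_mem_parts hC hB hxC ?_)⟩
      exact hBeq ▸ mem_filter.2 ⟨hxS, hxb⟩
    · rintro ⟨hxS, hbx⟩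
      obtain ⟨C, hC, hxC⟩ := π.exists_mem hxS
      refine ⟨C, ⟨?_, hC⟩, hxC⟩
      rintro rfl
      exact hbx.not_ge (C.le_max' x hxC)
  refine ⟨b, hb, π.ofSubset (erase_subset B π.parts) hsup, ?_, ?_⟩
  · intro C hC x hx z hz y hy
    exact hπ C (mem_of_mem_erase hC) x hx z hz y (mem_filter.1 hy).1
  · ext1
    rw [parts_consBlock, ← hBeq]
    exact insert_erase hB

theorem last_eq_of_consBlock_eq {b b' : α} {hb : b ∈ S} {hb' : b' ∈ S}
    {π : Finpartition (S.filter (b < ·))} {π' : Finpartition (S.filter (b' < ·))}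
    (h : consBlock hb π = consBlock hb' π') : b = b' := by
  have hmin : ∀ {c}, c ∈ S → S.min' ⟨b, hb⟩ ∈ S.filter (· ≤ c) := fun hc =>
    mem_filter.2 ⟨S.min'_mem _, S.min'_le _ hc⟩
  have hblock : S.filter (· ≤ b) = S.filter (· ≤ b') := by
    refine (consBlock hb π).eq_of_mem_parts ?_ ?_ (hmin hb) (hmin hb')
    · rw [parts_consBlock]
      exact mem_insert_self _ _
    · rw [h, parts_consBlock]
      exact mem_insert_self _ _
  have hmem := fun c => Finset.ext_iff.1 hblock c
  simp only [mem_filter] at hmem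
  exact le_antisymm ((hmem b).1 ⟨hb, le_rfl⟩).2 ((hmem b').2 ⟨hb', le_rfl⟩).2

theorem consBlock_injective {b : α} (hb : b ∈ S) : Function.Injective (consBlock hb) := by
  intro π π' h
  ext1
  rw [← erase_insert (filter_le_notMem_parts hb π), ← parts_consBlock hb, h, parts_consBlock,
    erase_insert (filter_le_notMem_parts hb π')]

theorem sum_isInterval_eq_sum_first_block {R : Type*} [CommSemiring R] (hS : S.Nonempty)
    (g : Finset α → R) :
    ∑ π : Finpartition S with IsInterval π, ∏ B ∈ π.parts, g B =
      ∑ b ∈ S, g (S.filter (· ≤ b)) *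
        ∑ π : Finpartition (S.filter (b < ·)) with IsInterval π, ∏ B ∈ π.parts, g B := by
  simp only [mul_sum]
  rw [← sum_coe_sort S, sum_sigma']
  symm
  refine sum_bij (fun p _ => consBlock p.1.2 p.2) ?_ ?_ ?_ ?_
  · rintro ⟨b, π⟩ hp
    simp only [mem_sigma, mem_filter, mem_univ, true_and] at hp ⊢
    exact isInterval_consBlock b.2 hp
  · rintro ⟨⟨b, hb⟩, π⟩ - ⟨⟨b', hb'⟩, π'⟩ - h
    obtain rfl : b = b' := last_eq_of_consBlock_eq h
    obtain rfl : π = π' := consBlock_injective hb h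
    rfl
  · intro π hπ
    obtain ⟨b, hb, π', hπ', rfl⟩ := (mem_filter.1 hπ).2.exists_eq_consBlock hS
    exact ⟨⟨⟨b, hb⟩, π'⟩, by simpa using hπ', rfl⟩
  · rintro ⟨b, π⟩ -
    rw [parts_consBlock, prod_insert (filter_le_notMem_parts b.2 π)]

end IntervalPartitions

section BooleanCumulants

attribute [local instance] LinearOrder.toDecidableEq LinearOrder.toDecidableLE
  LinearOrder.toDecidableLT

variable {R A α : Type*} [CommRing R] [Ring A] [Algebra R A] [LinearOrder α]

/-- The joint Boolean cumulant `φ(a₀ (1 - p) a₁ (1 - p) ⋯ (1 - p) aₙ)` of the letters of a word,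
where `p` plays the role of the projection onto the vacuum vector. -/
def booleanCumulant (φ : A →ₗ[R] R) (p : A) (L : List A) : R :=
  φ (L.intersperse (1 - p)).prod

theorem prod_intersperse_cons {M : Type*} [Monoid M] (q a : M) {L : List M} (hL : L ≠ []) :
    ((a :: L).intersperse q).prod = a * q * (L.intersperse q).prod := by
  obtain ⟨b, L, rfl⟩ := List.exists_cons_of_ne_nil hL
  simp only [List.intersperse_cons_cons, List.prod_cons, mul_assoc]

theorem map_mul_prod_sort_eq_sum {φ : A →ₗ[R] R} {p : A} (hφ : φ 1 = 1)
    (hp : ∀ a b, φ (a * p * b) = φ a * φ b) (x : α → A) (c : A) {S : Finset α}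
    (hS : S.Nonempty) :
    φ (c * (S.sort.map x).prod) =
      ∑ b ∈ S, φ (c * (((S.filter (· ≤ b)).sort.map x).intersperse (1 - p)).prod) *
        φ ((S.filter (b < ·)).sort.map x).prod := by
  induction S using Finset.induction_on_min generalizing c with
  | empty => exact absurd hS not_nonempty_empty
  | insert a S ha ih =>
    have haS : a ∉ S := fun h => (ha a h).false
    have hle_a : (insert a S).filter (· ≤ a) = {a} := by
      rw [filter_insert, if_pos le_rfl, filter_false_of_mem fun y hy => (ha y hy).not_ge,
        insert_empty_eq]
    have hlt_a : (insert a S).filter (a < ·) = S := by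
      rw [filter_insert, if_neg (lt_irrefl a), filter_true_of_mem ha]
    have hlt : ∀ b ∈ S, (insert a S).filter (b < ·) = S.filter (b < ·) := fun b hb => by
      rw [filter_insert, if_neg (ha b hb).not_gt]
    have hle : ∀ b ∈ S, ((((insert a S).filter (· ≤ b)).sort.map x).intersperse (1 - p)).prod =
        x a * (1 - p) * (((S.filter (· ≤ b)).sort.map x).intersperse (1 - p)).prod := by
      intro b hb
      rw [filter_insert, if_pos (ha b hb).le,
        sort_insert _ (fun y hy => (ha y (mem_of_mem_filter y hy)).le)
          (fun h => haS (mem_of_mem_filter a h)), List.map_cons, prod_intersperse_cons]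
      exact List.ne_nil_of_length_pos (by simpa using (nonempty_filter_le hb).card_pos)
    rw [sum_insert haS, hle_a, hlt_a, sort_insert _ (fun y hy => (ha y hy).le) haS, sort_singleton]
    simp only [List.map_cons, List.map_nil, List.prod_cons, List.intersperse_singleton,
      List.prod_nil, mul_one]
    rcases S.eq_empty_or_nonempty with rfl | hS'
    · simp [hφ]
    · have hsplit : c * (x a * (S.sort.map x).prod) = c * x a * p * (S.sort.map x).prod +
          c * x a * (1 - p) * (S.sort.map x).prod := by noncomm_ring
      rw [hsplit, map_add, hp, ih (c * x a * (1 - p)) hS']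
      congr 1
      refine sum_congr rfl fun b hb => ?_
      rw [hle b hb, hlt b hb]
      simp only [mul_assoc]

theorem map_prod_sort_eq_sum_isInterval {φ : A →ₗ[R] R} {p : A} (hφ : φ 1 = 1)
    (hp : ∀ a b, φ (a * p * b) = φ a * φ b) (x : α → A) (S : Finset α) :
    φ (S.sort.map x).prod =
      ∑ π : Finpartition S with IsInterval π,
        ∏ B ∈ π.parts, booleanCumulant φ p (B.sort.map x) := by
  induction S using Finset.strongInduction with
  | H S ih =>
    rcases S.eq_empty_or_nonempty with rfl | hS
    · have hparts : ∀ π : Finpartition (∅ : Finset α), π.parts = ∅ := fun π =>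
        Finpartition.parts_eq_empty_iff.2 rfl
      have hcard : Fintype.card (Finpartition (∅ : Finset α)) = 1 :=
        Fintype.card_unique (α := Finpartition (⊥ : Finset α))
      simp [hparts, IsInterval, hφ, hcard]
    · rw [sum_isInterval_eq_sum_first_block hS]
      have hcut := map_mul_prod_sort_eq_sum hφ hp x 1 hS
      simp only [one_mul] at hcut
      rw [hcut]
      exact sum_congr rfl fun b hb => by
        rw [booleanCumulant, ih _ (filter_ssubset.2 ⟨b, hb, lt_irrefl b⟩)]

end BooleanCumulants

section Rescaling

variable {R A : Type*} [CommRing R] [Ring A] [Algebra R A]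

/-- The element acting as `r` on the range of `p` and as `1` on its complement. -/
def rescale (p : A) (r : R) : A := 1 + (r - 1) • p

theorem rescale_mul_one_sub_mul_rescale {p : A} (hp : IsIdempotentElem p) (r : R) :
    rescale p r * (1 - p) * rescale p r = 1 - p := by
  simp [rescale, add_mul, mul_add, hp.mul_one_sub_self, hp.one_sub_mul_self]

theorem prod_intersperse_map_conj {M : Type*} [Monoid M] {d q : M} (hd : d * q * d = q)
    {L : List M} (hL : L ≠ []) :
    ((L.map fun a => d * a * d).intersperse q).prod = d * (L.intersperse q).prod * d := by
  induction L with
  | nil => exact absurd rfl hL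
  | cons a L ih =>
    rcases eq_or_ne L [] with rfl | hL'
    · simp
    · calc (((a :: L).map fun a => d * a * d).intersperse q).prod
          = d * a * d * q * (d * (L.intersperse q).prod * d) := by
            rw [List.map_cons, prod_intersperse_cons _ _ (List.map_eq_nil_iff.not.2 hL'), ih hL']
        _ = d * (a * (d * q * d) * (L.intersperse q).prod) * d := by simp only [mul_assoc]
        _ = d * ((a :: L).intersperse q).prod * d := by rw [hd, prod_intersperse_cons _ _ hL']

theorem booleanCumulant_map_conj_rescale {φ : A →ₗ[R] R} {p : A} (hφ : φ 1 = 1)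
    (hp : ∀ a b, φ (a * p * b) = φ a * φ b) (hp' : IsIdempotentElem p) (r : R) {L : List A}
    (hL : L ≠ []) :
    booleanCumulant φ p (L.map fun a => rescale p r * a * rescale p r) =
      r ^ 2 * booleanCumulant φ p L := by
  have hleft : ∀ a, φ (rescale p r * a) = r * φ a := fun a => by
    have := hp 1 a
    rw [one_mul, hφ, one_mul] at this
    simp only [rescale, add_mul, one_mul, smul_mul_assoc, map_add, map_smul, smul_eq_mul, this]
    ring
  have hright : ∀ a, φ (a * rescale p r) = r * φ a := fun a => by
    have := hp a 1
    rw [mul_one, hφ, mul_one] at this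
    simp only [rescale, mul_add, mul_one, mul_smul_comm, map_add, map_smul, smul_eq_mul, this]
    ring
  rw [booleanCumulant, prod_intersperse_map_conj (rescale_mul_one_sub_mul_rescale hp' r) hL,
    hright, hleft, booleanCumulant]
  ring

theorem isSelfAdjoint_rescale [StarRing R] [StarRing A] [StarModule R A] {p : A} {r : R}
    (hp : IsSelfAdjoint p) (hr : IsSelfAdjoint r) : IsSelfAdjoint (rescale p r) :=
  (IsSelfAdjoint.one A).add ((hr.sub (.one R)).smul hp)

end Rescaling

section EtaSeries

variable {k m n : ℕ} {f g : NCSeries k} {μ : Dist k}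

theorem partCoeff_eq_orderEmbOfFin (f : NCSeries k) (w : Fin (m + 1) → Fin k)
    {B : Finset (Fin (m + 1))} (hB : #B = n + 1) :
    partCoeff f w B = f n fun j => w (B.orderEmbOfFin hB j) := by
  obtain rfl : n = #B - 1 := by omega
  rw [partCoeff, dif_pos (card_pos.1 (by omega))]
  rfl

theorem partCoeff_univ (f : NCSeries k) (w : Fin (n + 1) → Fin k) :
    partCoeff f w univ = f n w := by
  rw [partCoeff_eq_orderEmbOfFin f w (card_fin (n + 1)),
    ← orderEmbOfFin_unique (card_fin (n + 1)) (fun x => mem_univ (id x)) strictMono_id]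
  rfl

theorem genCoeff_fullPart (f : NCSeries k) (w : Fin (n + 1) → Fin k) :
    genCoeff f w (fullPart n) = f n w := by
  simp [genCoeff, fullPart, partCoeff_univ]

theorem isIntervalPartition_fullPart (n : ℕ) : IsIntervalPartition (fullPart n) := by
  intro B hB x _ z _ y _ _
  obtain rfl : B = univ := by simpa [fullPart] using hB
  exact mem_univ y

theorem card_lt_of_mem_parts_of_ne_fullPart {π : FP (n + 1)} (hπ : π ≠ fullPart n)
    {B : Finset (Fin (n + 1))} (hB : B ∈ π.parts) : #B < n + 1 := by
  refine (card_le_univ B).trans_eq (Fintype.card_fin _) |>.lt_of_ne fun hcard => hπ ?_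
  obtain rfl : B = univ := (card_eq_iff_eq_univ B).1 (by rw [hcard, Fintype.card_fin])
  ext C
  have huniv : C ∈ π.parts ↔ C = univ := by
    refine ⟨fun hC => ?_, fun h => h ▸ hB⟩
    obtain ⟨y, hy⟩ := π.nonempty_of_mem_parts hC
    exact π.eq_of_mem_parts hC hB hy (mem_univ y)
  simp [huniv, fullPart]

theorem IsEtaSeries.unique (hf : IsEtaSeries μ f) (hg : IsEtaSeries μ g) : f = g := by
  suffices ∀ n w, f n w = g n w from funext₂ this
  intro n
  induction n using Nat.strong_induction_on with
  | _ n ih =>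
    intro w
    have hproper : ∀ π : FP (n + 1), π ≠ fullPart n → genCoeff f w π = genCoeff g w π := by
      intro π hπ
      refine prod_congr rfl fun B hB => ?_
      have hlt := card_lt_of_mem_parts_of_ne_fullPart hπ hB
      have hpos := card_pos.2 (π.nonempty_of_mem_parts hB)
      obtain ⟨l, hl⟩ : ∃ l, #B = l + 1 := ⟨#B - 1, by omega⟩
      rw [partCoeff_eq_orderEmbOfFin f w hl, partCoeff_eq_orderEmbOfFin g w hl, ih l (by omega)]
    have hsum := (hf n w).symm.trans (hg n w)
    rw [← add_sum_erase _ _ (mem_univ (fullPart n)), ← add_sum_erase _ _ (mem_univ (fullPart n)),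
      if_pos (isIntervalPartition_fullPart n), if_pos (isIntervalPartition_fullPart n),
      genCoeff_fullPart, genCoeff_fullPart] at hsum
    refine add_right_cancel (hsum.trans ?_)
    congr 1
    refine sum_congr rfl fun π hπ => ?_
    rw [hproper π (ne_of_mem_erase hπ)]

variable {A : Type*} [Ring A] [Algebra ℂ A]

/-- The series of joint Boolean cumulants of a tuple of elements. -/
def booleanCumulantSeries (φ : A →ₗ[ℂ] ℂ) (p : A) (x : Fin k → A) : NCSeries k :=
  fun _ w => booleanCumulant φ p (List.ofFn fun j => x (w j))

theorem partCoeff_booleanCumulantSeries (φ : A →ₗ[ℂ] ℂ) (p : A) (x : Fin k → A)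
    (w : Fin (m + 1) → Fin k) {B : Finset (Fin (m + 1))} (hB : B.Nonempty) :
    partCoeff (booleanCumulantSeries φ p x) w B =
      booleanCumulant φ p (B.sort.map fun j => x (w j)) := by
  have hcard : #B = #B - 1 + 1 := (Nat.succ_pred_eq_of_pos hB.card_pos).symm
  rw [partCoeff_eq_orderEmbOfFin _ w hcard, booleanCumulantSeries, List.ofFn_eq_map,
    ← listMap_orderEmbOfFin_finRange B hcard, List.map_map]
  rfl

theorem isEtaSeries_booleanCumulantSeries {φ : A →ₗ[ℂ] ℂ} {p : A} (hφ : φ 1 = 1)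
    (hp : ∀ a b, φ (a * p * b) = φ a * φ b) {x : Fin k → A}
    (hμ : ∀ (n : ℕ) (w : Fin (n + 1) → Fin k),
      momentSeries μ n w = φ (List.ofFn fun j => x (w j)).prod) :
    IsEtaSeries μ (booleanCumulantSeries φ p x) := by
  intro n w
  rw [hμ, List.ofFn_eq_map, ← Fin.sort_univ, map_prod_sort_eq_sum_isInterval hφ hp, ← sum_filter]
  refine sum_congr ?_ fun π _ => ?_
  · ext π
    rw [mem_filter, mem_filter]
    simp [IsInterval, IsIntervalPartition]
  · exact prod_congr rfl fun B hB =>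
      (partCoeff_booleanCumulantSeries φ p x w (π.nonempty_of_mem_parts hB)).symm

theorem booleanCumulantSeries_conj_rescale {φ : A →ₗ[ℂ] ℂ} {p : A} (hφ : φ 1 = 1)
    (hp : ∀ a b, φ (a * p * b) = φ a * φ b) (hp' : IsIdempotentElem p) (x : Fin k → A) (r : ℂ) :
    booleanCumulantSeries φ p (fun i => rescale p r * x i * rescale p r) =
      fun n w => r ^ 2 * booleanCumulantSeries φ p x n w := by
  funext n w
  rw [booleanCumulantSeries, booleanCumulantSeries, ← booleanCumulant_map_conj_rescale hφ hp hp' r,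
    List.map_ofFn]
  · rfl
  · simp

/-- The joint distribution of the tuple `x` with respect to the functional `φ`. -/
noncomputable def jointDist (φ : A →ₗ[ℂ] ℂ) (x : Fin k → A) : Dist k :=
  φ ∘ₗ (FreeAlgebra.lift ℂ x).toLinearMap

theorem momentSeries_jointDist (φ : A →ₗ[ℂ] ℂ) (x : Fin k → A) (n : ℕ)
    (w : Fin (n + 1) → Fin k) :
    momentSeries (jointDist φ x) n w = φ (List.ofFn fun j => x (w j)).prod := by
  simp only [momentSeries, jointDist, LinearMap.comp_apply, AlgHom.toLinearMap_apply,
    map_list_prod, List.map_ofFn, Function.comp_def, FreeAlgebra.lift_ι_apply]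

theorem isEtaSeries_jointDist {φ : A →ₗ[ℂ] ℂ} {p : A} (hφ : φ 1 = 1)
    (hp : ∀ a b, φ (a * p * b) = φ a * φ b) (x : Fin k → A) :
    IsEtaSeries (jointDist φ x) (booleanCumulantSeries φ p x) :=
  isEtaSeries_booleanCumulantSeries hφ hp (momentSeries_jointDist φ x)

end EtaSeries

section VectorStates

open ContinuousLinearMap InnerProductSpace

variable {𝕜 H : Type*} [RCLike 𝕜] [NormedAddCommGroup H] [InnerProductSpace 𝕜 H]

/-- The functional `T ↦ ⟪Ω, T Ω⟫`, which is a state when `‖Ω‖ = 1`. -/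
noncomputable def vectorState (Ω : H) : (H →L[𝕜] H) →ₗ[𝕜] 𝕜 :=
  (innerSL 𝕜 Ω ∘L ContinuousLinearMap.apply 𝕜 H Ω).toLinearMap

theorem vectorState_apply (Ω : H) (T : H →L[𝕜] H) : vectorState Ω T = inner 𝕜 Ω (T Ω) := rfl

theorem vectorState_one {Ω : H} (hΩ : ‖Ω‖ = 1) : vectorState Ω (1 : H →L[𝕜] H) = 1 :=
  inner_self_eq_one_of_norm_eq_one hΩ

theorem vectorState_mul_rankOne_mul (Ω : H) (S T : H →L[𝕜] H) :
    vectorState Ω (S * rankOne 𝕜 Ω Ω * T) = vectorState Ω S * vectorState Ω T := by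
  simp only [vectorState_apply, mul_apply_eq_comp, rankOne_apply, map_smul, inner_smul_right,
    mul_comm]

theorem vectorState_star_mul_self_nonneg [CompleteSpace H] (Ω : H) (T : H →L[𝕜] H) :
    0 ≤ vectorState Ω (star T * T) := by
  rw [vectorState_apply, mul_apply_eq_comp, star_eq_adjoint, adjoint_inner_right,
    inner_self_eq_norm_sq_to_K]
  positivity

end VectorStates

section CStarDistributions

variable {k : ℕ}

theorem isDc_jointDist {A : Type} [CStarAlgebra A] {φ : A →ₗ[ℂ] ℂ} (hφ : φ 1 = 1)
    (hpos : ∀ a, 0 ≤ φ (star a * a)) {x : Fin k → A} (hx : ∀ i, IsSelfAdjoint (x i)) :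
    IsDc (jointDist φ x) :=
  ⟨by simp [IsDalg, jointDist, hφ], A, inferInstance, inferInstance, inferInstance, inferInstance,
    inferInstance, inferInstance, φ, x, hφ, hpos, hx, momentSeries_jointDist φ x⟩

theorem exists_starAlgHom_eq_vectorState.{u} {A : Type u} [CStarAlgebra A] {φ : A →ₗ[ℂ] ℂ}
    (hφ : φ 1 = 1) (hpos : ∀ a, 0 ≤ φ (star a * a)) :
    ∃ (H : Type u) (_ : NormedAddCommGroup H) (_ : InnerProductSpace ℂ H) (_ : CompleteSpace H)
      (ρ : A →⋆ₐ[ℂ] (H →L[ℂ] H)) (Ω : H), ‖Ω‖ = 1 ∧ ∀ a, φ a = vectorState Ω (ρ a) := by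
  let _ := CStarAlgebra.spectralOrder A
  have := CStarAlgebra.spectralOrderedRing A
  let F : A →ₚ[ℂ] ℂ := PositiveLinearMap.mk₀ φ fun a ha => by
    obtain ⟨b, rfl⟩ := CStarAlgebra.nonneg_iff_eq_star_mul_self.mp ha
    exact hpos b
  have hF : ∀ a, F a = φ a := fun a => rfl
  let Ω : F.GNS := (F.toPreGNS 1 : F.PreGNS)
  have hvec : ∀ a, φ a = vectorState Ω (F.gnsStarAlgHom a) := fun a => by
    have hΩa : F.gnsStarAlgHom a Ω = (F.leftMulMapPreGNS a (F.toPreGNS 1) : F.PreGNS) :=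
      F.gnsNonUnitalStarAlgHom_apply_coe
    rw [vectorState_apply, hΩa, UniformSpace.Completion.inner_coe,
      PositiveLinearMap.preGNS_inner_def]
    simp [hF]
  refine ⟨F.GNS, inferInstance, inferInstance, inferInstance, F.gnsStarAlgHom, Ω, ?_, hvec⟩
  have hinner : inner ℂ Ω Ω = (1 : ℂ) := by
    rw [← hφ, hvec 1, map_one, vectorState_apply, one_apply_eq_self]
  rw [norm_eq_sqrt_re_inner (𝕜 := ℂ), hinner, RCLike.one_re, Real.sqrt_one]

theorem IsDc.exists_vectorState {μ : Dist k} (hμ : IsDc μ) :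
    ∃ (H : Type) (_ : NormedAddCommGroup H) (_ : InnerProductSpace ℂ H) (_ : CompleteSpace H)
      (Ω : H) (x : Fin k → H →L[ℂ] H), ‖Ω‖ = 1 ∧ (∀ i, IsSelfAdjoint (x i)) ∧
      ∀ (n : ℕ) (w : Fin (n + 1) → Fin k),
        momentSeries μ n w = vectorState Ω (List.ofFn fun j => x (w j)).prod := by
  obtain ⟨-, A, instRing, instStar, instCStar, instAlgebra, instStarModule, instComplete, φ, a,
    hφ, hpos, ha, hmom⟩ := hμ
  let _ : CStarAlgebra A :=
    { instRing, instStar, instCStar, instAlgebra, instStarModule, instComplete with }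
  obtain ⟨H, _, _, _, ρ, Ω, hΩ, hρ⟩ := exists_starAlgHom_eq_vectorState hφ hpos
  refine ⟨H, inferInstance, inferInstance, inferInstance, Ω, fun i => ρ (a i), hΩ,
    fun i => (ha i).map ρ, fun n w => ?_⟩
  rw [hmom, hρ, map_list_prod, List.map_ofFn]
  rfl

end CStarDistributions

/-- Proposition 4.8: `E_c(k)` is closed under multiplication by
scalars `t ∈ (0,∞)` : if `f` is the `η`-series of some `μ ∈ D_c(k)` and `t > 0`, then
`t·f` is the `η`-series of some distribution in `D_c(k)`. -/
theorem statement7 (k : ℕ) (hk : 0 < k) (f : NCSeries k)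
    (hf : ∃ μ : Dist k, IsDc μ ∧ IsEtaSeries μ f) (t : ℝ) (ht : 0 < t) :
    ∃ ν : Dist k, IsDc ν ∧ IsEtaSeries ν (fun n w => (t : ℂ) * f n w) := by
  obtain ⟨μ, hμ, hf⟩ := hf
  obtain ⟨H, _, _, _, Ω, x, hΩ, hx, hmom⟩ := hμ.exists_vectorState
  let p : H →L[ℂ] H := InnerProductSpace.rankOne ℂ Ω Ω
  have hp : IsStarProjection p := InnerProductSpace.isStarProjection_rankOne_self hΩ
  have hsplit : ∀ a b, vectorState Ω (a * p * b) = vectorState Ω a * vectorState Ω b :=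
    vectorState_mul_rankOne_mul Ω
  obtain rfl : f = booleanCumulantSeries (vectorState Ω) p x :=
    hf.unique (isEtaSeries_booleanCumulantSeries (vectorState_one hΩ) hsplit hmom)
  let d := rescale p ((√t : ℝ) : ℂ)
  have hd : IsSelfAdjoint d := isSelfAdjoint_rescale hp.isSelfAdjoint (Complex.conj_ofReal _)
  refine ⟨jointDist (vectorState Ω) fun i => d * x i * d,
    isDc_jointDist (vectorState_one hΩ) (vectorState_star_mul_self_nonneg Ω)
      fun i => (hx i).conjugate_self hd, ?_⟩
  have hη := isEtaSeries_jointDist (vectorState_one hΩ) hsplit fun i => d * x i * d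
  rw [booleanCumulantSeries_conj_rescale (vectorState_one hΩ) hsplit hp.isIdempotentElem] at hη
  rwa [← Complex.ofReal_pow, Real.sq_sqrt ht.le] at hη
end BBP
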